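/- Let n ≥ 1 and p₀,…,pₙ ∈ [0,1] with M := max(p₀,…,pₙ) > 0. For τ ∈ (0, M], define W(τ) to be the smallest index k ∈ {0,…,n} such that pₖ ≥ τ. If τ is drawn uniformly at random from the interval [0, M], then the expected value of W satisfies E[W] = n − (1/M) · Σ_{t=0}^{n−1} max(p₀,…,p_t). In particular, this expectation lies in the interval [0, n]. -/

import Mathlib

/-!
The proof is the layer-cake formula for the exit index `W`. For `τ ∈ (0, M]` an exit occurs, so `W τ`
is the number of `t < n` with `t < W τ`, and `t < W τ` says exactly that `max (p 0, …, p t) < τ`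
(`exitIndex_eq_sum`). Integrating over `τ ∈ (0, M]`, the `t`-th indicator contributes
`M - max (p 0, …, p t)` because `0 ≤ max (p 0, …, p t) ≤ M` (`integral_indicator_Ioi`). The bounds
on the value follow from the same two inequalities.
-/

open MeasureTheory

/-- `pmax p t = max (p 0, …, p t)`, the running maximum of the prefix scores. -/
noncomputable def pmax (p : ℕ → ℝ) (t : ℕ) : ℝ :=
  (Finset.range (t + 1)).sup' ⟨0, Finset.mem_range.mpr t.succ_pos⟩ p

lemma pmax_lt_iff (p : ℕ → ℝ) (t : ℕ) (τ : ℝ) : pmax p t < τ ↔ ∀ k ≤ t, p k < τ := by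
  refine (Finset.sup'_lt_iff _).trans ?_
  simp only [Finset.mem_range, Nat.lt_succ_iff]

lemma pmax_mono (p : ℕ → ℝ) : Monotone (pmax p) := fun s t h =>
  Finset.sup'_mono p (Finset.range_mono (by omega)) _

lemma pmax_nonneg (p : ℕ → ℝ) (h0 : 0 ≤ p 0) (t : ℕ) : 0 ≤ pmax p t :=
  h0.trans (Finset.le_sup' p (Finset.mem_range.mpr t.succ_pos))

/-- The exit index counts the prefixes `0, …, t` with `t < n` on which no score has reached `τ`.
The bound `τ ≤ pmax p n` makes the set under `sInf` nonempty, so its junk value `0` plays no role. -/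
lemma exitIndex_eq_sum (n : ℕ) (p : ℕ → ℝ) (τ : ℝ) (hτ : τ ≤ pmax p n) :
    ((sInf {k | k ≤ n ∧ τ ≤ p k} : ℕ) : ℝ)
      = ∑ t ∈ Finset.range n, (Set.Ioi (pmax p t)).indicator (fun _ => (1 : ℝ)) τ := by
  have hne : {k | k ≤ n ∧ τ ≤ p k}.Nonempty := by
    by_contra h
    refine absurd ((pmax_lt_iff p n τ).2 fun k hk => ?_) hτ.not_gt
    by_contra hk'
    exact h ⟨k, hk, not_lt.1 hk'⟩
  have hmem := Nat.sInf_mem hne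
  set W := sInf {k | k ≤ n ∧ τ ≤ p k} with hW
  have key : ∀ t ∈ Finset.range n,
      (Set.Ioi (pmax p t)).indicator (fun _ => (1 : ℝ)) τ = if t < W then 1 else 0 := by
    intro t ht
    have htn := Finset.mem_range.1 ht
    have hiff : pmax p t < τ ↔ t < W := by
      rw [pmax_lt_iff]
      constructor
      · intro h
        by_contra hle
        exact absurd (h W (not_lt.1 hle)) hmem.2.not_gt
      · intro h k hk
        by_contra hk'
        have : W ≤ k := Nat.sInf_le ⟨by omega, not_lt.1 hk'⟩
        omega
    simp [Set.indicator_apply, hiff]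
  rw [Finset.sum_congr rfl key, Finset.sum_boole]
  have hfilter : (Finset.range n).filter (fun t => t < W) = Finset.range W := by
    ext t
    have := hmem.1
    simp only [Finset.mem_filter, Finset.mem_range]
    omega
  rw [hfilter, Finset.card_range]

lemma integral_indicator_Ioi (a M : ℝ) (ha : 0 ≤ a) (haM : a ≤ M) :
    ∫ τ in Set.Ioc (0 : ℝ) M, (Set.Ioi a).indicator (fun _ => (1 : ℝ)) τ = M - a := by
  rw [setIntegral_indicator measurableSet_Ioi, Set.Ioc_inter_Ioi, sup_of_le_right ha]
  simp [haM]

/-- **Expected exit time (PrAViC).** Let `p 0, …, p n ∈ [0,1]` with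
`M = max (p 0, …, p n) > 0`.  For `τ ∈ (0, M]` let `W τ` be the smallest index
`k ∈ {0,…,n}` with `p k ≥ τ`.  If `τ` is uniform on `[0, M]`, then
`E[W] = n - (1/M) · ∑_{t=0}^{n-1} max (p 0, …, p t)`, and this value lies in `[0, n]`. -/
theorem expected_exit_time (n : ℕ) (hn : 1 ≤ n) (p : ℕ → ℝ)
    (hp : ∀ i ≤ n, p i ∈ Set.Icc (0 : ℝ) 1)
    (M : ℝ) (hM : M = pmax p n) (hMpos : 0 < M) :
    (∫ τ in Set.Ioc (0 : ℝ) M, ((sInf {k | k ≤ n ∧ τ ≤ p k} : ℕ) : ℝ)) / M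
        = (n : ℝ) - (1 / M) * ∑ t ∈ Finset.range n, pmax p t
      ∧ 0 ≤ (n : ℝ) - (1 / M) * ∑ t ∈ Finset.range n, pmax p t
      ∧ (n : ℝ) - (1 / M) * ∑ t ∈ Finset.range n, pmax p t ≤ n := by
  have hpos : ∀ t, 0 ≤ pmax p t := pmax_nonneg p (hp 0 (Nat.zero_le n)).1
  have hle : ∀ t ∈ Finset.range n, pmax p t ≤ M := fun t ht =>
    hM ▸ pmax_mono p (Finset.mem_range.1 ht).le
  have hsum_nonneg : 0 ≤ ∑ t ∈ Finset.range n, pmax p t := Finset.sum_nonneg fun t _ => hpos t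
  have hsum_le : ∑ t ∈ Finset.range n, pmax p t ≤ n * M := by
    simpa using Finset.sum_le_sum hle
  have hint : ∫ τ in Set.Ioc (0 : ℝ) M, ((sInf {k | k ≤ n ∧ τ ≤ p k} : ℕ) : ℝ)
      = n * M - ∑ t ∈ Finset.range n, pmax p t := by
    rw [setIntegral_congr_fun measurableSet_Ioc
      fun τ hτ => exitIndex_eq_sum n p τ (hM ▸ hτ.2)]
    rw [integral_finsetSum]
    · rw [Finset.sum_congr rfl fun t ht => integral_indicator_Ioi _ M (hpos t) (hle t ht)]
      simp
    · intro t _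
      exact (integrable_const (1 : ℝ)).indicator measurableSet_Ioi
  refine ⟨?_, ?_, ?_⟩
  · rw [hint]
    field_simp
  · rw [one_div_mul_eq_div, sub_nonneg, div_le_iff₀ hMpos]
    exact hsum_le
  · have : 0 ≤ 1 / M * ∑ t ∈ Finset.range n, pmax p t := by positivity
    linarith
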